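/- Adversarial update cost-budget bound (Theorem 4.2, cost part): in a finite discounted MDP, let δ > 0, ε_C ≥ 0, d ∈ ℝ, n1 ≥ 1, and let C : S → A → ℝ be a cost signal. Suppose a max-reward stage σ_0, …, σ_{n1} satisfies for every i < n1: (σ_i s a = 0 → σ_{i+1} s a = 0), D̄_KL(σ_{i+1}‖σ_i) ≤ δ, the cost surrogate constraint J_C(σ_i) + (1/(1−γ)) · 𝔸_C(σ_i, σ_{i+1}) ≤ d holds, and ε_C(σ_i, σ_{i+1}) ≤ ε_C; and a subsequent min-cost stage π_0 = σ_{n1}, π_1, …, π_{n2} satisfies for every i < n2: (π_i s a = 0 → π_{i+1} s a = 0), D̄_KL(π_{i+1}‖π_i) ≤ δ, 𝔸_C(π_i, π_{i+1}) ≤ 0, and ε_C(π_i, π_{i+1}) ≤ ε_C. Then J_C(π_{n2}) − d ≤ (√(2δ) · γ / (1−γ)²) · (n1 + n2) · ε_C. -/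

import Mathlib

open Real BigOperators

/-- Induced transition matrix of policy `pol`: `P_pol(s,s') = ∑ a, pol s a * P s a s'`. -/
noncomputable def transMat {S A : Type*} [Fintype A] (P : S → A → S → ℝ)
    (pol : S → A → ℝ) : Matrix S S ℝ :=
  fun s s' => ∑ a, pol s a * P s a s'

/-- Discounted state visitation distribution
`d_pol(s) = (1-γ) ∑ₜ γ^t ∑_{s0} ρ0 s0 * (P_pol^t)(s0,s)`. -/
noncomputable def dVisit {S A : Type*} [Fintype S] [DecidableEq S] [Fintype A]
    (P : S → A → S → ℝ) (γ : ℝ) (ρ0 : S → ℝ) (pol : S → A → ℝ) (s : S) : ℝ :=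
  (1 - γ) * ∑' t : ℕ, γ ^ t * ∑ s0, ρ0 s0 * (transMat P pol ^ t) s0 s

/-- Value function of signal `F` under policy `pol`. -/
noncomputable def Vfun {S A : Type*} [Fintype S] [DecidableEq S] [Fintype A]
    (P : S → A → S → ℝ) (γ : ℝ) (F : S → A → ℝ) (pol : S → A → ℝ) (s : S) : ℝ :=
  ∑' t : ℕ, γ ^ t * ∑ s', (transMat P pol ^ t) s s' * ∑ a, pol s' a * F s' a

/-- Return `J_F(pol) = ∑ s, ρ0 s * V_F^pol(s)`. -/
noncomputable def Jret {S A : Type*} [Fintype S] [DecidableEq S] [Fintype A]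
    (P : S → A → S → ℝ) (γ : ℝ) (ρ0 : S → ℝ) (F : S → A → ℝ) (pol : S → A → ℝ) : ℝ :=
  ∑ s, ρ0 s * Vfun P γ F pol s

/-- Action-value function `Q_F^pol(s,a) = F s a + γ ∑_{s'} P s a s' * V_F^pol(s')`. -/
noncomputable def Qfun {S A : Type*} [Fintype S] [DecidableEq S] [Fintype A]
    (P : S → A → S → ℝ) (γ : ℝ) (F : S → A → ℝ) (pol : S → A → ℝ) (s : S) (a : A) : ℝ :=
  F s a + γ * ∑ s', P s a s' * Vfun P γ F pol s'

/-- Advantage function `A_F^pol(s,a) = Q_F^pol(s,a) - V_F^pol(s)`. -/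
noncomputable def Adv {S A : Type*} [Fintype S] [DecidableEq S] [Fintype A]
    (P : S → A → S → ℝ) (γ : ℝ) (F : S → A → ℝ) (pol : S → A → ℝ) (s : S) (a : A) : ℝ :=
  Qfun P γ F pol s a - Vfun P γ F pol s

/-- Expected surrogate advantage
`𝔸_F(pol,pol') = ∑ s, d_pol(s) ∑ a, pol' s a * A_F^pol(s,a)`. -/
noncomputable def surrAdv {S A : Type*} [Fintype S] [DecidableEq S] [Fintype A]
    (P : S → A → S → ℝ) (γ : ℝ) (ρ0 : S → ℝ) (F : S → A → ℝ)
    (pol pol' : S → A → ℝ) : ℝ :=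
  ∑ s, dVisit P γ ρ0 pol s * ∑ a, pol' s a * Adv P γ F pol s a

/-- `ε_F(pol,pol') = max_s |∑ a, pol' s a * A_F^pol(s,a)|`. -/
noncomputable def epsAdv {S A : Type*} [Fintype S] [DecidableEq S] [Fintype A] [Nonempty S]
    (P : S → A → S → ℝ) (γ : ℝ) (F : S → A → ℝ) (pol pol' : S → A → ℝ) : ℝ :=
  Finset.univ.sup' Finset.univ_nonempty fun s => |∑ a, pol' s a * Adv P γ F pol s a|

/-- Per-state KL divergence `KL(pol'‖pol)(s) = ∑ a, pol' s a * log (pol' s a / pol s a)`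
(with the convention `0 * log 0 = 0`, automatic since `Real.log 0 = 0`). -/
noncomputable def klState {S A : Type*} [Fintype A] (pol' pol : S → A → ℝ) (s : S) : ℝ :=
  ∑ a, pol' s a * Real.log (pol' s a / pol s a)

/-- Averaged KL divergence `D̄_KL(pol'‖pol) = ∑ s, d_pol(s) * KL(pol'‖pol)(s)`. -/
noncomputable def avgKL {S A : Type*} [Fintype S] [DecidableEq S] [Fintype A]
    (P : S → A → S → ℝ) (γ : ℝ) (ρ0 : S → ℝ) (pol' pol : S → A → ℝ) : ℝ :=
  ∑ s, dVisit P γ ρ0 pol s * klState pol' pol s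


/-!
For a policy `p` with transition matrix `M`, the Neumann series `∑ₜ γᵗ Mᵗ = (1 - γ M)⁻¹` turns the
value function and the visitation distribution into the solutions of `(1 - γ M) V = ⟨p, F⟩` and
`d (1 - γ M) = (1 - γ) ρ`. Pairing the two equations gives the performance difference identity
`(1 - γ) (J q - J p) = ⟨d_q, ⟨q, A_p⟩⟩`. Replacing `d_q` by `d_p` turns the right-hand side into the
surrogate advantage, at a cost of at most `‖d_q - d_p‖₁` times the largest expected advantage.
Perturbing the equation of `d`, in which `1 - γ M` shrinks the `ℓ¹` norm by at most the factor
`1 - γ`, bounds `‖d_q - d_p‖₁` by the average `ℓ¹` distance of the policies, and Pinsker's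
inequality bounds the latter by the averaged divergence. Each update therefore overshoots its
surrogate by at most `√(2δ) γ ε / (1 - γ)²`. The last reward update starts the cost stage within
one such overshoot of the budget, and every cost update adds at most one more.
-/

section Pinsker

open InformationTheory

variable {A : Type*} [Fintype A] {μ ν : A → ℝ}

lemma three_mul_sub_one_sq_le_klFun {x : ℝ} (hx : 0 ≤ x) :
    3 * (x - 1) ^ 2 ≤ 2 * (x + 2) * klFun x := by
  set f : ℝ → ℝ := fun y ↦ 2 * (y + 2) * klFun y - 3 * (y - 1) ^ 2 with hf
  set f' : ℝ → ℝ := fun y ↦ 2 * klFun y + 2 * (y + 2) * log y - 6 * (y - 1) with hf'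
  have hasDerivAt_f {y : ℝ} (hy : 0 < y) : HasDerivAt f (f' y) y := by
    have h := ((((hasDerivAt_id y).add_const 2).const_mul 2).mul (hasDerivAt_klFun hy.ne')).sub
      ((((hasDerivAt_id y).sub_const 1).pow 2).const_mul 3)
    refine h.congr_deriv ?_
    simp only [hf', id_eq]
    ring
  have hasDerivAt_f' {y : ℝ} (hy : 0 < y) : HasDerivAt f' (4 * (log y - (1 - y⁻¹))) y := by
    have h := (((hasDerivAt_klFun hy.ne').const_mul 2).add
      ((((hasDerivAt_id y).add_const 2).const_mul 2).mul (hasDerivAt_log hy.ne'))).sub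
      (((hasDerivAt_id y).sub_const 1).const_mul 6)
    refine h.congr_deriv ?_
    simp only [id_eq]
    field_simp
    ring
  have convexOn_f : ConvexOn ℝ (Set.Ici 0) f := by
    refine convexOn_of_hasDerivWithinAt2_nonneg (f' := f') (f'' := fun y ↦ 4 * (log y - (1 - y⁻¹)))
      (convex_Ici 0) (by fun_prop) ?_ ?_ ?_ <;> rw [interior_Ici]
    · exact fun y hy ↦ (hasDerivAt_f hy).hasDerivWithinAt
    · exact fun y hy ↦ (hasDerivAt_f' hy).hasDerivWithinAt
    · exact fun y hy ↦ mul_nonneg zero_le_four (sub_nonneg.2 (one_sub_inv_le_log_of_pos hy))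
  have isMinOn_f : IsMinOn f (Set.Ici 0) 1 := by
    refine convexOn_f.isMinOn_of_rightDeriv_eq_zero (by simp) ?_
    rw [(hasDerivAt_f one_pos).hasDerivWithinAt.derivWithin (uniqueDiffWithinAt_Ioi 1)]
    simp [hf', klFun_one]
  have f_one_le : f 1 ≤ f x := isMinOn_f hx
  simp only [hf, klFun_one] at f_one_le
  linarith

lemma sub_sq_le_mul_klFun_div {p q : ℝ} (hp : 0 ≤ p) (hq : 0 ≤ q) (hpq : p = 0 → q = 0) :
    (q - p) ^ 2 ≤ 2 * (p * klFun (q / p)) * ((q + 2 * p) / 3) := by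
  rcases hp.eq_or_lt with rfl | hp
  · simp [hpq rfl]
  calc (q - p) ^ 2 = p ^ 2 / 3 * (3 * (q / p - 1) ^ 2) := by field_simp
    _ ≤ p ^ 2 / 3 * (2 * (q / p + 2) * klFun (q / p)) :=
        mul_le_mul_of_nonneg_left (three_mul_sub_one_sq_le_klFun (by positivity)) (by positivity)
    _ = 2 * (p * klFun (q / p)) * ((q + 2 * p) / 3) := by field_simp

lemma sum_mul_klFun_div (hμ : ∑ a, μ a = 1) (hν : ∑ a, ν a = 1) (hμν : ∀ a, μ a = 0 → ν a = 0) :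
    ∑ a, μ a * klFun (ν a / μ a) = ∑ a, ν a * log (ν a / μ a) := by
  have hterm (a : A) : μ a * klFun (ν a / μ a) = ν a * log (ν a / μ a) + μ a - ν a := by
    rcases eq_or_ne (μ a) 0 with h | h
    · simp [h, hμν a h]
    · rw [klFun_apply]; field_simp
  simp only [hterm, Finset.sum_sub_distrib, Finset.sum_add_distrib, hμ, hν, add_sub_cancel_right]

theorem sq_sum_abs_sub_le_two_mul_sum_mul_log (hμ : μ ∈ stdSimplex ℝ A) (hν : ν ∈ stdSimplex ℝ A)
    (hμν : ∀ a, μ a = 0 → ν a = 0) :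
    (∑ a, |ν a - μ a|) ^ 2 ≤ 2 * ∑ a, ν a * log (ν a / μ a) := by
  have mixture_sum : ∑ a, (ν a + 2 * μ a) / 3 = 1 := by
    rw [← Finset.sum_div, Finset.sum_add_distrib, ← Finset.mul_sum, hμ.2, hν.2]
    norm_num
  calc (∑ a, |ν a - μ a|) ^ 2
      ≤ (∑ a, 2 * (μ a * klFun (ν a / μ a))) * ∑ a, (ν a + 2 * μ a) / 3 := by
        refine Finset.sum_sq_le_sum_mul_sum_of_sq_le_mul _ (fun a _ ↦ ?_) (fun a _ ↦ ?_)
          fun a _ ↦ ?_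
        · exact mul_nonneg zero_le_two
            (mul_nonneg (hμ.1 a) (klFun_nonneg (div_nonneg (hν.1 a) (hμ.1 a))))
        · linarith [hμ.1 a, hν.1 a]
        · rw [sq_abs]
          exact sub_sq_le_mul_klFun_div (hμ.1 a) (hν.1 a) (hμν a)
    _ = 2 * ∑ a, ν a * log (ν a / μ a) := by
        rw [mixture_sum, mul_one, ← Finset.mul_sum, sum_mul_klFun_div hμ.2 hν.2 hμν]

end Pinsker

section Matrix

open Matrix

variable {m n : Type*} [Fintype m] [Fintype n]

lemma sum_abs_of_mem_stdSimplex {v : n → ℝ} (hv : v ∈ stdSimplex ℝ n) : ∑ i, |v i| = 1 := by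
  simpa only [abs_of_nonneg (hv.1 _)] using hv.2

lemma abs_dotProduct_le_sum_abs_mul {u v : n → ℝ} {c : ℝ} (hv : ∀ i, |v i| ≤ c) :
    |u ⬝ᵥ v| ≤ (∑ i, |u i|) * c := by
  calc |u ⬝ᵥ v| ≤ ∑ i, |u i * v i| := Finset.abs_sum_le_sum_abs _ _
    _ ≤ ∑ i, |u i| * c := by
        gcongr with i; rw [abs_mul]; gcongr; exact hv i
    _ = (∑ i, |u i|) * c := (Finset.sum_mul ..).symm

lemma sum_abs_vecMul_le (v : m → ℝ) (M : Matrix m n ℝ) :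
    ∑ j, |(v ᵥ* M) j| ≤ ∑ i, |v i| * ∑ j, |M i j| := by
  calc ∑ j, |(v ᵥ* M) j| ≤ ∑ j, ∑ i, |v i| * |M i j| := by
        gcongr with j
        simp only [← abs_mul]
        exact Finset.abs_sum_le_sum_abs (fun i ↦ v i * M i j) Finset.univ
    _ = ∑ i, |v i| * ∑ j, |M i j| := by
        rw [Finset.sum_comm]; simp only [Finset.mul_sum]

lemma sum_abs_vecMul_le_sum_abs {M : Matrix m n ℝ} (hM : ∀ i, M i ∈ stdSimplex ℝ n) (v : m → ℝ) :
    ∑ j, |(v ᵥ* M) j| ≤ ∑ i, |v i| := by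
  simpa only [sum_abs_of_mem_stdSimplex (hM _), mul_one] using sum_abs_vecMul_le v M

variable [DecidableEq n] {M : Matrix n n ℝ} {γ : ℝ}

lemma mem_rowStochastic_iff_forall_mem_stdSimplex :
    M ∈ rowStochastic ℝ n ↔ ∀ i, M i ∈ stdSimplex ℝ n :=
  mem_rowStochastic_iff_sum.trans forall_and.symm

lemma one_sub_abs_mul_sum_abs_le (hM : M ∈ rowStochastic ℝ n) (v : n → ℝ) :
    (1 - |γ|) * ∑ i, |v i| ≤ ∑ i, |(v ᵥ* (1 - γ • M)) i| := by
  have hv (i : n) : |v i| ≤ |(v ᵥ* (1 - γ • M)) i| + |γ| * |(v ᵥ* M) i| := by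
    have h : v i = (v ᵥ* (1 - γ • M)) i + γ * (v ᵥ* M) i := by
      simp [vecMul_sub, vecMul_smul]
    rw [← abs_mul]
    exact (congrArg _ h).trans_le (abs_add_le _ _)
  have hsum := Finset.sum_le_sum fun i (_ : i ∈ Finset.univ) ↦ hv i
  rw [Finset.sum_add_distrib, ← Finset.mul_sum] at hsum
  have hcontr := sum_abs_vecMul_le_sum_abs (mem_rowStochastic_iff_forall_mem_stdSimplex.1 hM) v
  linarith [mul_le_mul_of_nonneg_left hcontr (abs_nonneg γ)]

section Neumann

attribute [local instance] Matrix.linftyOpNormedRing Matrix.linftyOpNormedAlgebra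

lemma linfty_opNorm_le_one_of_mem_rowStochastic (hM : M ∈ rowStochastic ℝ n) : ‖M‖ ≤ 1 := by
  rw [linfty_opNorm_def, ← NNReal.coe_one, NNReal.coe_le_coe]
  refine Finset.sup_le fun i _ ↦ ?_
  rw [← NNReal.coe_le_coe, NNReal.coe_sum]
  exact (sum_abs_of_mem_stdSimplex (mem_rowStochastic_iff_forall_mem_stdSimplex.1 hM i)).le

lemma norm_smul_lt_one_of_mem_rowStochastic (hM : M ∈ rowStochastic ℝ n) (hγ : |γ| < 1) :
    ‖γ • M‖ < 1 := by
  rw [norm_smul, norm_eq_abs]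
  exact (mul_le_of_le_one_right (abs_nonneg γ)
    (linfty_opNorm_le_one_of_mem_rowStochastic hM)).trans_lt hγ

lemma isUnit_one_sub_smul_of_mem_rowStochastic (hM : M ∈ rowStochastic ℝ n) (hγ : |γ| < 1) :
    IsUnit (1 - γ • M) :=
  isUnit_one_sub_of_norm_lt_one (norm_smul_lt_one_of_mem_rowStochastic hM hγ)

lemma hasSum_pow_smul_pow_of_mem_rowStochastic (hM : M ∈ rowStochastic ℝ n) (hγ : |γ| < 1) :
    HasSum (fun t : ℕ ↦ γ ^ t • M ^ t) (1 - γ • M)⁻¹ := by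
  have h := hasSum_geom_series_inverse (γ • M) (norm_smul_lt_one_of_mem_rowStochastic hM hγ)
  simp only [smul_pow, ← nonsing_inv_eq_ringInverse] at h
  exact h

end Neumann

lemma tsum_pow_mul_pow_mulVec (hM : M ∈ rowStochastic ℝ n) (hγ : |γ| < 1) (v : n → ℝ) (i : n) :
    ∑' t : ℕ, γ ^ t * (M ^ t *ᵥ v) i = ((1 - γ • M)⁻¹ *ᵥ v) i := by
  have h := (hasSum_pow_smul_pow_of_mem_rowStochastic hM hγ).map (mulVec.addMonoidHomLeft v)
    (continuous_id.matrix_mulVec continuous_const)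
  simpa [smul_mulVec] using (Pi.hasSum.1 h i).tsum_eq

lemma tsum_pow_mul_vecMul_pow (hM : M ∈ rowStochastic ℝ n) (hγ : |γ| < 1) (v : n → ℝ) (i : n) :
    ∑' t : ℕ, γ ^ t * (v ᵥ* M ^ t) i = (v ᵥ* (1 - γ • M)⁻¹) i := by
  have h := (hasSum_pow_smul_pow_of_mem_rowStochastic hM hγ).map
    (AddMonoidHom.mk' (v ᵥ* ·) (vecMul_add · · v)) (continuous_const.matrix_vecMul continuous_id)
  simpa [vecMul_smul] using (Pi.hasSum.1 h i).tsum_eq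

end Matrix

section PolicyUpdate

open Matrix

variable {S A : Type*} [Fintype S] [Fintype A] {P : S → A → S → ℝ} {p q F : S → A → ℝ}
  {ρ : S → ℝ} {γ : ℝ}

/-- The expectation `𝔼_{a ∼ p(s)} F(s, a)` of a signal under a policy, as a function of the state.
The expected one-step signal is `policyMean p F`, and the surrogate objectives are averages of
`policyMean q (Adv P γ F p)`. -/
def policyMean (p F : S → A → ℝ) (s : S) : ℝ := ∑ a, p s a * F s a

lemma sum_abs_transMat_sub_le (hP : ∀ s a, P s a ∈ stdSimplex ℝ S) (s : S) :
    ∑ s', |(transMat P q - transMat P p) s s'| ≤ ∑ a, |q s a - p s a| := by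
  have h : (transMat P q - transMat P p) s = (q s - p s) ᵥ* (of (P s)) := by
    rw [sub_vecMul]; rfl
  simpa only [h, Pi.sub_apply] using
    sum_abs_vecMul_le_sum_abs (M := of (P s)) (hP s) (q s - p s)

variable [DecidableEq S]

lemma transMat_mem_rowStochastic (hP : ∀ s a, P s a ∈ stdSimplex ℝ S)
    (hp : ∀ s, p s ∈ stdSimplex ℝ A) : transMat P p ∈ rowStochastic ℝ S := by
  refine mem_rowStochastic_iff_sum.2 ⟨fun s s' ↦ ?_, fun s ↦ ?_⟩
  · exact Finset.sum_nonneg fun a _ ↦ mul_nonneg ((hp s).1 a) ((hP s a).1 s')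
  · simp only [transMat]
    rw [Finset.sum_comm]
    simp only [← Finset.mul_sum, (hP s _).2, mul_one, (hp s).2]

lemma one_sub_smul_transMat_mulVec_Vfun (hM : transMat P p ∈ rowStochastic ℝ S) (hγ : |γ| < 1) :
    (1 - γ • transMat P p) *ᵥ Vfun P γ F p = policyMean p F := by
  have hV : Vfun P γ F p = (1 - γ • transMat P p)⁻¹ *ᵥ policyMean p F :=
    funext (tsum_pow_mul_pow_mulVec hM hγ (policyMean p F))
  rw [hV, mulVec_mulVec, mul_nonsing_inv _ ((isUnit_iff_isUnit_det _).1
    (isUnit_one_sub_smul_of_mem_rowStochastic hM hγ)), one_mulVec]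

lemma dVisit_vecMul_one_sub_smul_transMat (hM : transMat P p ∈ rowStochastic ℝ S) (hγ : |γ| < 1) :
    dVisit P γ ρ p ᵥ* (1 - γ • transMat P p) = (1 - γ) • ρ := by
  have hd : dVisit P γ ρ p = (1 - γ) • (ρ ᵥ* (1 - γ • transMat P p)⁻¹) :=
    funext fun s ↦ congrArg ((1 - γ) * ·) (tsum_pow_mul_vecMul_pow hM hγ ρ s)
  rw [hd, smul_vecMul, vecMul_vecMul, nonsing_inv_mul _ ((isUnit_iff_isUnit_det _).1
    (isUnit_one_sub_smul_of_mem_rowStochastic hM hγ)), vecMul_one]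

lemma dVisit_mem_stdSimplex (hM : transMat P p ∈ rowStochastic ℝ S) (hγ0 : 0 ≤ γ) (hγ1 : γ < 1)
    (hρ : ρ ∈ stdSimplex ℝ S) : dVisit P γ ρ p ∈ stdSimplex ℝ S := by
  refine ⟨fun s ↦ mul_nonneg (sub_nonneg.2 hγ1.le) (tsum_nonneg fun t ↦ ?_), ?_⟩
  · exact mul_nonneg (pow_nonneg hγ0 t)
      (nonneg_vecMul_of_mem_rowStochastic (pow_mem hM t) hρ.1 s)
  · have hone : (1 - γ • transMat P p) *ᵥ 1 = (1 - γ) • (1 : S → ℝ) := by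
      rw [sub_mulVec, one_mulVec, smul_mulVec, hM.2, sub_smul, one_smul]
    have htotal : (1 - γ) * (dVisit P γ ρ p ⬝ᵥ 1) = (1 - γ) * (ρ ⬝ᵥ 1) := by
      rw [← smul_eq_mul, ← dotProduct_smul, ← hone, dotProduct_mulVec,
        dVisit_vecMul_one_sub_smul_transMat hM (abs_lt.2 ⟨by linarith, hγ1⟩), smul_dotProduct,
        smul_eq_mul]
    simpa only [dotProduct_one, hρ.2] using mul_left_cancel₀ (sub_pos.2 hγ1).ne' htotal

lemma policyMean_Adv (hq : ∀ s, ∑ a, q s a = 1) :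
    policyMean q (Adv P γ F p) =
      policyMean q F - (1 - γ • transMat P q) *ᵥ Vfun P γ F p := by
  have hnext (s : S) : ∑ a, q s a * ∑ s', P s a s' * Vfun P γ F p s' =
      (transMat P q *ᵥ Vfun P γ F p) s := by
    simp only [mulVec, dotProduct, transMat, Finset.mul_sum, Finset.sum_mul]
    rw [Finset.sum_comm]
    simp only [mul_assoc]
  ext s
  simp only [policyMean, Adv, Qfun, mul_sub, mul_add, mul_left_comm _ γ, Finset.sum_sub_distrib,
    Finset.sum_add_distrib, ← Finset.mul_sum, ← Finset.sum_mul, hq, hnext, sub_mulVec, one_mulVec,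
    smul_mulVec, Pi.sub_apply, Pi.smul_apply, smul_eq_mul]
  ring

theorem dVisit_dotProduct_policyMean_Adv (hP : ∀ s a, P s a ∈ stdSimplex ℝ S) (hγ : |γ| < 1)
    (hq : ∀ s, q s ∈ stdSimplex ℝ A) :
    dVisit P γ ρ q ⬝ᵥ policyMean q (Adv P γ F p) = (1 - γ) * (Jret P γ ρ F q - Jret P γ ρ F p) := by
  have hMq := transMat_mem_rowStochastic hP hq
  rw [policyMean_Adv fun s ↦ (hq s).2, ← one_sub_smul_transMat_mulVec_Vfun hMq hγ, ← mulVec_sub,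
    dotProduct_mulVec, dVisit_vecMul_one_sub_smul_transMat hMq hγ, smul_dotProduct, dotProduct_sub]
  rfl

theorem sum_abs_dVisit_sub_le (hP : ∀ s a, P s a ∈ stdSimplex ℝ S) (hγ0 : 0 ≤ γ) (hγ1 : γ < 1)
    (hρ : ρ ∈ stdSimplex ℝ S) (hp : ∀ s, p s ∈ stdSimplex ℝ A) (hq : ∀ s, q s ∈ stdSimplex ℝ A) :
    (1 - γ) * ∑ s, |dVisit P γ ρ q s - dVisit P γ ρ p s| ≤
      γ * ∑ s, dVisit P γ ρ p s * ∑ a, |q s a - p s a| := by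
  have hMp := transMat_mem_rowStochastic hP hp
  have hMq := transMat_mem_rowStochastic hP hq
  have hγ : |γ| < 1 := by rwa [abs_of_nonneg hγ0]
  set dp := dVisit P γ ρ p
  set dq := dVisit P γ ρ q
  have hdp : dp ∈ stdSimplex ℝ S := dVisit_mem_stdSimplex hMp hγ0 hγ1 hρ
  have hperturb : (dq - dp) ᵥ* (1 - γ • transMat P q) =
      γ • (dp ᵥ* (transMat P q - transMat P p)) := by
    rw [sub_vecMul, dVisit_vecMul_one_sub_smul_transMat hMq hγ,
      ← dVisit_vecMul_one_sub_smul_transMat hMp hγ, ← vecMul_sub, sub_sub_sub_cancel_left,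
      ← smul_sub, vecMul_smul]
  calc (1 - γ) * ∑ s, |dq s - dp s|
      ≤ ∑ s, |((dq - dp) ᵥ* (1 - γ • transMat P q)) s| := by
        simpa only [abs_of_nonneg hγ0, Pi.sub_apply] using
          one_sub_abs_mul_sum_abs_le (γ := γ) hMq (dq - dp)
    _ = γ * ∑ s, |(dp ᵥ* (transMat P q - transMat P p)) s| := by
        simp only [hperturb, Pi.smul_apply, smul_eq_mul, abs_mul, abs_of_nonneg hγ0,
          Finset.mul_sum]
    _ ≤ γ * ∑ s, |dp s| * ∑ s', |(transMat P q - transMat P p) s s'| := by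
        exact mul_le_mul_of_nonneg_left (sum_abs_vecMul_le _ _) hγ0
    _ ≤ γ * ∑ s, dp s * ∑ a, |q s a - p s a| := by
        simp only [abs_of_nonneg (hdp.1 _)]
        gcongr with s
        · exact hdp.1 s
        · exact sum_abs_transMat_sub_le hP s

theorem sum_dVisit_mul_sum_abs_sub_le_sqrt_avgKL (hd : dVisit P γ ρ p ∈ stdSimplex ℝ S)
    (hp : ∀ s, p s ∈ stdSimplex ℝ A) (hq : ∀ s, q s ∈ stdSimplex ℝ A)
    (hpq : ∀ s a, p s a = 0 → q s a = 0) :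
    ∑ s, dVisit P γ ρ p s * ∑ a, |q s a - p s a| ≤ √(2 * avgKL P γ ρ q p) := by
  refine le_sqrt_of_sq_le ?_
  calc (∑ s, dVisit P γ ρ p s * ∑ a, |q s a - p s a|) ^ 2
      ≤ ∑ s, dVisit P γ ρ p s * (∑ a, |q s a - p s a|) ^ 2 :=
        pow_arith_mean_le_arith_mean_pow_of_even _ _ _ (fun s _ ↦ hd.1 s) hd.2 even_two
    _ ≤ ∑ s, dVisit P γ ρ p s * (2 * klState q p s) := by
        gcongr with s
        · exact hd.1 s
        · exact sq_sum_abs_sub_le_two_mul_sum_mul_log (hp s) (hq s) (hpq s)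
    _ = 2 * avgKL P γ ρ q p := by
        simp only [avgKL, Finset.mul_sum, mul_left_comm]

variable [Nonempty S]

lemma abs_policyMean_Adv_le_epsAdv (s : S) :
    |policyMean q (Adv P γ F p) s| ≤ epsAdv P γ F p q :=
  Finset.le_sup' (fun s ↦ |policyMean q (Adv P γ F p) s|) (Finset.mem_univ s)

lemma epsAdv_nonneg : 0 ≤ epsAdv P γ F p q :=
  (abs_nonneg _).trans (abs_policyMean_Adv_le_epsAdv (Classical.arbitrary S))

theorem abs_Jret_sub_sub_surrAdv_le (hP : ∀ s a, P s a ∈ stdSimplex ℝ S)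
    (hγ0 : 0 ≤ γ) (hγ1 : γ < 1) (hρ : ρ ∈ stdSimplex ℝ S)
    (hp : ∀ s, p s ∈ stdSimplex ℝ A) (hq : ∀ s, q s ∈ stdSimplex ℝ A)
    (hpq : ∀ s a, p s a = 0 → q s a = 0) :
    |Jret P γ ρ F q - Jret P γ ρ F p - 1 / (1 - γ) * surrAdv P γ ρ F p q| ≤
      √(2 * avgKL P γ ρ q p) * γ / (1 - γ) ^ 2 * epsAdv P γ F p q := by
  have hγ : 0 < 1 - γ := sub_pos.2 hγ1
  have hgap : (dVisit P γ ρ q - dVisit P γ ρ p) ⬝ᵥ policyMean q (Adv P γ F p) =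
      (1 - γ) * (Jret P γ ρ F q - Jret P γ ρ F p) - surrAdv P γ ρ F p q := by
    rw [sub_dotProduct,
      dVisit_dotProduct_policyMean_Adv hP (abs_lt.2 ⟨by linarith, hγ1⟩) hq]
    rfl
  have hvisit : ∑ s, |dVisit P γ ρ q s - dVisit P γ ρ p s| ≤
      √(2 * avgKL P γ ρ q p) * γ / (1 - γ) := by
    have hd := dVisit_mem_stdSimplex (transMat_mem_rowStochastic hP hp) hγ0 hγ1 hρ
    rw [le_div_iff₀' hγ, mul_comm _ γ]
    exact (sum_abs_dVisit_sub_le hP hγ0 hγ1 hρ hp hq).trans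
      (mul_le_mul_of_nonneg_left (sum_dVisit_mul_sum_abs_sub_le_sqrt_avgKL hd hp hq hpq) hγ0)
  calc |Jret P γ ρ F q - Jret P γ ρ F p - 1 / (1 - γ) * surrAdv P γ ρ F p q|
      = |(dVisit P γ ρ q - dVisit P γ ρ p) ⬝ᵥ policyMean q (Adv P γ F p)| / (1 - γ) := by
        rw [hgap, ← abs_of_pos hγ, ← abs_div, abs_of_pos hγ]
        congr 1
        field_simp
    _ ≤ (∑ s, |dVisit P γ ρ q s - dVisit P γ ρ p s|) * epsAdv P γ F p q / (1 - γ) := by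
        gcongr
        exact abs_dotProduct_le_sum_abs_mul abs_policyMean_Adv_le_epsAdv
    _ ≤ √(2 * avgKL P γ ρ q p) * γ / (1 - γ) * epsAdv P γ F p q / (1 - γ) := by
        gcongr
        exact epsAdv_nonneg
    _ = √(2 * avgKL P γ ρ q p) * γ / (1 - γ) ^ 2 * epsAdv P γ F p q := by
        field_simp

theorem Jret_le_add_surrAdv_add (hP : ∀ s a, P s a ∈ stdSimplex ℝ S)
    (hγ0 : 0 ≤ γ) (hγ1 : γ < 1) (hρ : ρ ∈ stdSimplex ℝ S)
    (hp : ∀ s, p s ∈ stdSimplex ℝ A) (hq : ∀ s, q s ∈ stdSimplex ℝ A)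
    (hpq : ∀ s a, p s a = 0 → q s a = 0) {δ ε : ℝ} (hKL : avgKL P γ ρ q p ≤ δ)
    (hε : epsAdv P γ F p q ≤ ε) :
    Jret P γ ρ F q ≤ Jret P γ ρ F p + 1 / (1 - γ) * surrAdv P γ ρ F p q +
      √(2 * δ) * γ / (1 - γ) ^ 2 * ε := by
  have hbound : √(2 * avgKL P γ ρ q p) * γ / (1 - γ) ^ 2 * epsAdv P γ F p q ≤
      √(2 * δ) * γ / (1 - γ) ^ 2 * ε := by
    gcongr
    exact epsAdv_nonneg
  linarith [le_of_abs_le (abs_Jret_sub_sub_surrAdv_le (F := F) hP hγ0 hγ1 hρ hp hq hpq)]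

end PolicyUpdate

theorem adversarial_cost_budget_bound_general {S A : Type*} [Fintype S] [DecidableEq S] [Fintype A]
    [Nonempty S] {P : S → A → S → ℝ} (hP : ∀ s a, P s a ∈ stdSimplex ℝ S)
    {γ : ℝ} (hγ0 : 0 ≤ γ) (hγ1 : γ < 1) {ρ : S → ℝ} (hρ : ρ ∈ stdSimplex ℝ S)
    {δ ε d : ℝ} {C : S → A → ℝ} {n : ℕ} {q : S → A → ℝ} {p : ℕ → S → A → ℝ}
    (hq : ∀ s, q s ∈ stdSimplex ℝ A) (hp : ∀ i ≤ n, ∀ s, p i s ∈ stdSimplex ℝ A)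
    (hq_abs : ∀ s a, q s a = 0 → p 0 s a = 0)
    (hq_KL : avgKL P γ ρ (p 0) q ≤ δ)
    (hq_surr : Jret P γ ρ C q + 1 / (1 - γ) * surrAdv P γ ρ C q (p 0) ≤ d)
    (hq_eps : epsAdv P γ C q (p 0) ≤ ε)
    (hp_abs : ∀ i < n, ∀ s a, p i s a = 0 → p (i + 1) s a = 0)
    (hp_KL : ∀ i < n, avgKL P γ ρ (p (i + 1)) (p i) ≤ δ)
    (hp_surr : ∀ i < n, surrAdv P γ ρ C (p i) (p (i + 1)) ≤ 0)
    (hp_eps : ∀ i < n, epsAdv P γ C (p i) (p (i + 1)) ≤ ε) :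
    Jret P γ ρ C (p n) - d ≤ √(2 * δ) * γ / (1 - γ) ^ 2 * (1 + n) * ε := by
  set overshoot := √(2 * δ) * γ / (1 - γ) ^ 2 * ε
  have hstart : Jret P γ ρ C (p 0) ≤ d + overshoot := by
    linarith [Jret_le_add_surrAdv_add hP hγ0 hγ1 hρ hq (hp 0 n.zero_le) hq_abs hq_KL hq_eps]
  have hstep (i : ℕ) (hi : i < n) :
      Jret P γ ρ C (p (i + 1)) - Jret P γ ρ C (p i) ≤ overshoot := by
    have hsurr : 1 / (1 - γ) * surrAdv P γ ρ C (p i) (p (i + 1)) ≤ 0 :=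
      mul_nonpos_of_nonneg_of_nonpos (one_div_nonneg.2 (sub_nonneg.2 hγ1.le)) (hp_surr i hi)
    linarith [Jret_le_add_surrAdv_add hP hγ0 hγ1 hρ (hp i hi.le) (hp (i + 1) hi) (hp_abs i hi)
      (hp_KL i hi) (hp_eps i hi)]
  have hstage : Jret P γ ρ C (p n) - Jret P γ ρ C (p 0) ≤ n * overshoot := by
    rw [← Finset.sum_range_sub (fun i ↦ Jret P γ ρ C (p i))]
    simpa using Finset.sum_le_card_nsmul (Finset.range n) _ _
      fun i hi ↦ hstep i (Finset.mem_range.1 hi)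
  calc Jret P γ ρ C (p n) - d ≤ (1 + n) * overshoot := by linarith
    _ = √(2 * δ) * γ / (1 - γ) ^ 2 * (1 + n) * ε := by ring

/-- adversarial update cost-budget bound (Theorem 4.2, cost part). -/
theorem adversarial_cost_budget_bound {S A : Type*} [Fintype S] [DecidableEq S] [Fintype A] [Nonempty S] [Nonempty A]
    (P : S → A → S → ℝ) (hP0 : ∀ s a s', 0 ≤ P s a s') (hP1 : ∀ s a, ∑ s', P s a s' = 1)
    (γ : ℝ) (hγ0 : 0 < γ) (hγ1 : γ < 1)
    (ρ0 : S → ℝ) (hρ0 : ∀ s, 0 ≤ ρ0 s) (hρ1 : ∑ s, ρ0 s = 1)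
    (δ : ℝ) (hδ : 0 < δ) (εC : ℝ) (hεC : 0 ≤ εC) (d : ℝ) (C : S → A → ℝ)
    (n1 n2 : ℕ) (hn1 : 1 ≤ n1) (σ pol : ℕ → S → A → ℝ)
    (hσ0 : ∀ i ≤ n1, ∀ s a, 0 ≤ σ i s a)
    (hσ1 : ∀ i ≤ n1, ∀ s, ∑ a, σ i s a = 1)
    (hσabs : ∀ i < n1, ∀ s a, σ i s a = 0 → σ (i + 1) s a = 0)
    (hσKL : ∀ i < n1, avgKL P γ ρ0 (σ (i + 1)) (σ i) ≤ δ)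
    (hσsurr : ∀ i < n1,
      Jret P γ ρ0 C (σ i) + (1 / (1 - γ)) * surrAdv P γ ρ0 C (σ i) (σ (i + 1)) ≤ d)
    (hσeps : ∀ i < n1, epsAdv P γ C (σ i) (σ (i + 1)) ≤ εC)
    (hlink : pol 0 = σ n1)
    (hpol0 : ∀ i ≤ n2, ∀ s a, 0 ≤ pol i s a)
    (hpol1 : ∀ i ≤ n2, ∀ s, ∑ a, pol i s a = 1)
    (hpabs : ∀ i < n2, ∀ s a, pol i s a = 0 → pol (i + 1) s a = 0)
    (hpKL : ∀ i < n2, avgKL P γ ρ0 (pol (i + 1)) (pol i) ≤ δ)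
    (hpA : ∀ i < n2, surrAdv P γ ρ0 C (pol i) (pol (i + 1)) ≤ 0)
    (hpeps : ∀ i < n2, epsAdv P γ C (pol i) (pol (i + 1)) ≤ εC) :
    Jret P γ ρ0 C (pol n2) - d ≤
      (Real.sqrt (2 * δ) * γ / (1 - γ) ^ 2) * ((n1 : ℝ) + (n2 : ℝ)) * εC := by
  have hlast : n1 - 1 < n1 := Nat.sub_one_lt_of_lt hn1
  have hpol : pol 0 = σ (n1 - 1 + 1) := by rw [hlink, Nat.sub_add_cancel hn1]
  have hn : (1 : ℝ) ≤ n1 := Nat.one_le_cast.2 hn1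
  calc Jret P γ ρ0 C (pol n2) - d ≤ √(2 * δ) * γ / (1 - γ) ^ 2 * (1 + n2) * εC :=
        adversarial_cost_budget_bound_general (fun s a ↦ ⟨hP0 s a, hP1 s a⟩) hγ0.le hγ1 ⟨hρ0, hρ1⟩
          (fun s ↦ ⟨hσ0 _ hlast.le s, hσ1 _ hlast.le s⟩) (fun i hi s ↦ ⟨hpol0 i hi s, hpol1 i hi s⟩)
          (hpol ▸ hσabs _ hlast) (hpol ▸ hσKL _ hlast) (hpol ▸ hσsurr _ hlast)
          (hpol ▸ hσeps _ hlast) hpabs hpKL hpA hpeps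
    _ ≤ √(2 * δ) * γ / (1 - γ) ^ 2 * (n1 + n2) * εC := by gcongr
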